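/- Let d ∈ {3, 4, 5, …}, ν ∈ ℂ \ (−ℕ₀) with −ν/2 ∉ −ℕ₀ as needed for the right-hand side, x ∈ [−1, 1], and ρ ∈ ℝ with 0 < ρ < 1. Then ( ρ^{(d−1)/2} (1−ρ²)^{ν−(d−1)/2} ) / (1 + ρ² − 2ρx)^ν = ( e^{−iπ(ν−(d−1)/2)} Γ((d−2)/2) ) / ( 2√π Γ(ν) ) · Σ_{n=0}^∞ (2n + d − 2) Q_{n+(d−3)/2}^{ν−(d−1)/2}((1+ρ²)/(2ρ)) C_n^{d/2−1}(x). -/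

import Mathlib

open Complex

/-- Pochhammer symbol (rising factorial) `(a)_k = a (a+1) ⋯ (a+k-1)`. -/
noncomputable def poch (a : ℂ) (k : ℕ) : ℂ := ∏ i ∈ Finset.range k, (a + (i : ℂ))

/-- Gauss hypergeometric function `₂F₁(a,b;c;w)` as a series. -/
noncomputable def hyp2F1 (a b c w : ℂ) : ℂ :=
  ∑' k : ℕ, poch a k * poch b k / (poch c k * (Nat.factorial k : ℂ)) * w ^ k

/-- Terminating generalized hypergeometric function `₃F₂(-m,a₂,a₃;b₁,b₂;1)`. -/
noncomputable def hyp3F2 (m : ℕ) (a2 a3 b1 b2 : ℂ) : ℂ :=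
  ∑ j ∈ Finset.range (m + 1),
    poch (-(m : ℂ)) j * poch a2 j * poch a3 j /
      (poch b1 j * poch b2 j * (Nat.factorial j : ℂ))

/-- Gegenbauer polynomial `C_n^μ(x)`. -/
noncomputable def gegenbauerC (n : ℕ) (μ : ℂ) (x : ℂ) : ℂ :=
  poch (2 * μ) n / (Nat.factorial n : ℂ) *
    ∑ j ∈ Finset.range (n + 1),
      poch (-(n : ℂ)) j * poch ((n : ℂ) + 2 * μ) j /
          (poch (μ + 1 / 2) j * (Nat.factorial j : ℂ)) * ((1 - x) / 2) ^ j

/-- Associated Legendre function of the second kind `Q_ν^μ(z)` (principal branches). -/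
noncomputable def legendreQ (ν μ z : ℂ) : ℂ :=
  (Real.sqrt Real.pi : ℂ) * Complex.exp (Real.pi * I * μ) * Complex.Gamma (ν + μ + 1) *
      (z ^ 2 - 1) ^ (μ / 2) /
      ((2 : ℂ) ^ (ν + 1) * Complex.Gamma (ν + 3 / 2) * z ^ (ν + μ + 1)) *
    hyp2F1 ((ν + μ + 2) / 2) ((ν + μ + 1) / 2) (ν + 3 / 2) (1 / z ^ 2)

/-- Legendre polynomial `P_n(x)`. -/
noncomputable def legendrePoly (n : ℕ) (x : ℂ) : ℂ :=
  ∑ j ∈ Finset.range (n + 1),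
    poch (-(n : ℂ)) j * poch ((n : ℂ) + 1) j / (poch 1 j * (Nat.factorial j : ℂ)) *
      ((1 - x) / 2) ^ j

/-- Chebyshev polynomial of the second kind `U_n(x)`. -/
noncomputable def chebyshevU (n : ℕ) (x : ℂ) : ℂ :=
  ((n : ℂ) + 1) *
    ∑ j ∈ Finset.range (n + 1),
      poch (-(n : ℂ)) j * poch ((n : ℂ) + 2) j / (poch (3 / 2) j * (Nat.factorial j : ℂ)) *
        ((1 - x) / 2) ^ j

/-!
Set `t = 2ρ / (1 + ρ²)`, so that `1 + ρ² - 2ρx = (1 + ρ²) (1 - t x)` and `t⁻¹` is the argument of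
the Legendre functions. Expand `(1 - t x) ^ (-ν)` in powers of `t x` and insert the expansion of
`(2 x) ^ m / m!` in Gegenbauer polynomials, which follows from their three-term recurrence by
induction on `m`. The coefficient of each Gegenbauer polynomial in the resulting double series is
the `₂F₁` series of a Legendre function. The rearrangement is justified by absolute convergence:
with `x = (u + u⁻¹) / 2`, the generating function `(1 - u X) ^ (-μ) (1 - u⁻¹ X) ^ (-μ)` bounds
`C_n^μ(x)` by powers of any `R > max ‖u‖ ‖u⁻¹‖`, which suffices when `x` lies inside the ellipse
with foci `±1` through `t⁻¹`.
-/

open Asymptotics Filter Finset Polynomial PowerSeries Topology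

section Pochhammer

lemma poch_eq_eval_ascPochhammer (a : ℂ) (k : ℕ) : poch a k = (ascPochhammer ℂ k).eval a := by
  induction k with
  | zero => simp [poch]
  | succ k ih => rw [ascPochhammer_succ_eval, ← ih, poch, prod_range_succ, poch]

@[simp]
lemma poch_zero (a : ℂ) : poch a 0 = 1 := by simp [poch]

lemma poch_succ (a : ℂ) (k : ℕ) : poch a (k + 1) = poch a k * (a + k) := by
  simp [poch, prod_range_succ]

lemma poch_succ_left (a : ℂ) (k : ℕ) : poch a (k + 1) = a * poch (a + 1) k := by
  simp [poch_eq_eval_ascPochhammer, ascPochhammer_succ_left]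

lemma poch_add (a : ℂ) (m k : ℕ) : poch a (m + k) = poch a m * poch (a + m) k := by
  simp [poch, prod_range_add, add_assoc]

lemma poch_one_left (k : ℕ) : poch 1 k = (k.factorial : ℂ) := by
  simp [poch_eq_eval_ascPochhammer]

lemma poch_ne_zero {a : ℂ} (ha : ∀ m : ℕ, a ≠ -(m : ℂ)) (k : ℕ) : poch a k ≠ 0 :=
  prod_ne_zero_iff.mpr fun i _ h ↦ ha i (eq_neg_of_add_eq_zero_left h)

lemma poch_neg_natCast_eq_zero {n k : ℕ} (h : n < k) : poch (-(n : ℂ)) k = 0 := by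
  rw [poch_eq_eval_ascPochhammer, ascPochhammer_eval_neg_coe_nat_of_lt h]

lemma poch_neg_natCast_succ (n k : ℕ) :
    poch (-((n + 1 : ℕ) : ℂ)) (k + 1) = -(n + 1) * poch (-(n : ℂ)) k := by
  rw [poch_succ_left, Nat.cast_succ, neg_add_rev, neg_add_cancel_comm]

lemma poch_half_mul_poch_half (a : ℂ) (k : ℕ) :
    poch ((a + 1) / 2) k * poch (a / 2) k = poch a (2 * k) / 4 ^ k := by
  induction k with
  | zero => simp
  | succ k ih =>
    rw [mul_add_one, poch_succ a (2 * k + 1), poch_succ a, poch_succ, poch_succ,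
      mul_mul_mul_comm, ih]
    push_cast
    ring

lemma Gamma_natCast_add {a : ℂ} (ha : ∀ m : ℕ, a ≠ -(m : ℂ)) (n : ℕ) :
    Gamma (n + a) = poch a n * Gamma a := by
  rw [poch_eq_eval_ascPochhammer, ← Gamma_add_nat_div_Gamma_eq a ha,
    div_mul_cancel₀ _ (Gamma_ne_zero ha), add_comm]

lemma summable_poch_div_poch_mul_pow (a b : ℂ) {w : ℂ} (hw : ‖w‖ < 1) :
    Summable fun n : ℕ ↦ poch a n / poch b n * w ^ n := by
  obtain ⟨l, hwl, hl⟩ := exists_between hw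
  have hlim : Tendsto (fun n : ℕ ↦ ‖(a + n) / (b + n) * w‖) atTop (𝓝 ‖w‖) := by
    have := tendsto_add_mul_div_add_mul_atTop_nhds a b (1 : ℂ) one_ne_zero
    simpa using (this.mul_const w).norm
  refine summable_of_ratio_norm_eventually_le hl ?_
  filter_upwards [hlim.eventually_lt_const hwl] with n hn
  have hsucc : poch a (n + 1) / poch b (n + 1) * w ^ (n + 1) =
      (a + n) / (b + n) * w * (poch a n / poch b n * w ^ n) := by
    rw [poch_succ, poch_succ, mul_div_mul_comm]
    ring
  rw [hsucc, norm_mul]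
  gcongr

lemma isBigO_pow_of_summable_mul_inv_pow {f : ℕ → ℂ} {r : ℝ} (hr : 0 < r)
    (hf : Summable fun n ↦ f n * ((r : ℂ)⁻¹) ^ n) : f =O[⊤] fun n ↦ r ^ n := by
  have hr' : (r : ℂ) ≠ 0 := by exact_mod_cast hr.ne'
  have h : f =o[atTop] fun n ↦ (r : ℂ) ^ n :=
    isLittleO_of_tendsto (fun n hn ↦ absurd hn (pow_ne_zero n hr'))
      (by simpa [div_eq_mul_inv] using hf.tendsto_atTop_zero)
  have h' : f =O[atTop] fun n ↦ r ^ n := by simpa [abs_of_pos hr] using h.isBigO.norm_right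
  exact h'.nat_of_atTop (.of_forall fun n hn ↦ absurd hn (pow_ne_zero n hr.ne'))

lemma isBigO_poch_div_poch (a b : ℂ) {r : ℝ} (hr : 1 < r) :
    (fun n ↦ poch a n / poch b n) =O[⊤] fun n ↦ r ^ n := by
  refine isBigO_pow_of_summable_mul_inv_pow (by positivity) (summable_poch_div_poch_mul_pow a b ?_)
  rw [norm_inv, norm_real, Real.norm_of_nonneg (by positivity)]
  exact inv_lt_one_of_one_lt₀ hr

lemma hasSum_poch_div_factorial_mul_pow (a : ℂ) {w : ℂ} (hw : ‖w‖ < 1) :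
    HasSum (fun m : ℕ ↦ poch a m / (m.factorial : ℂ) * w ^ m) (1 / (1 - w) ^ a) := by
  have hchoose (m : ℕ) : Ring.choose (a + m - 1) m = poch a m / (m.factorial : ℂ) := by
    rw [← Ring.multichoose_eq, eq_div_iff (by exact_mod_cast m.factorial_ne_zero), mul_comm,
      ← nsmul_eq_mul, Ring.factorial_nsmul_multichoose_eq_ascPochhammer,
      Polynomial.ascPochhammer_smeval_eq_eval, poch_eq_eval_ascPochhammer]
  simpa only [FormalMultilinearSeries.ofScalars_apply_eq, zero_add, smul_eq_mul, hchoose] using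
    (one_div_one_sub_cpow_hasFPowerSeriesOnBall_zero a).hasSum (y := w)
      (by rw [← ENNReal.ofReal_one, Metric.eball_ofReal]; simpa using hw)

end Pochhammer

section Recurrence

variable {μ : ℂ} (x : ℂ)

/-- The coefficient of `((1 - x) / 2) ^ j` in `gegenbauerC n μ x`; it vanishes for `j > n`. -/
noncomputable def gegenbauerCoeff (μ : ℂ) (n j : ℕ) : ℂ :=
  poch (-(n : ℂ)) j * poch (2 * μ) (n + j) /
    ((n.factorial : ℂ) * (poch (μ + 1 / 2) j * (j.factorial : ℂ)))

/-- The Gegenbauer polynomial `C_n^μ` as a polynomial in the variable `(1 - x) / 2`. -/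
noncomputable def gegenbauerPoly (μ : ℂ) (n : ℕ) : ℂ[X] :=
  ∑ j ∈ range (n + 1), monomial j (gegenbauerCoeff μ n j)

lemma coeff_gegenbauerPoly (n j : ℕ) :
    (gegenbauerPoly μ n).coeff j = gegenbauerCoeff μ n j := by
  rw [gegenbauerPoly, finsetSum_coeff]
  simp only [Polynomial.coeff_monomial, sum_ite_eq', mem_range, ite_eq_left_iff, not_lt]
  intro hj
  rw [gegenbauerCoeff, poch_neg_natCast_eq_zero hj, zero_mul, zero_div]

lemma gegenbauerC_eq_eval (n : ℕ) :
    gegenbauerC n μ x = (gegenbauerPoly μ n).eval ((1 - x) / 2) := by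
  rw [gegenbauerC, gegenbauerPoly, eval_finsetSum, mul_sum]
  refine sum_congr rfl fun j _ ↦ ?_
  rw [eval_monomial, gegenbauerCoeff, poch_add, add_comm (n : ℂ)]
  ring

lemma gegenbauerCoeff_zero_right (n : ℕ) :
    gegenbauerCoeff μ n 0 = poch (2 * μ) n / (n.factorial : ℂ) := by
  simp [gegenbauerCoeff]

lemma gegenbauerCoeff_recurrence_zero (n : ℕ) :
    (n + 2) * gegenbauerCoeff μ (n + 2) 0 =
      2 * (n + 1 + μ) * gegenbauerCoeff μ (n + 1) 0 - (n + 2 * μ) * gegenbauerCoeff μ n 0 := by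
  have h1 : (n : ℂ) + 1 ≠ 0 := by exact_mod_cast n.succ_ne_zero
  have h2 : (n : ℂ) + 1 + 1 ≠ 0 := by exact_mod_cast (n + 1).succ_ne_zero
  have hn : (n.factorial : ℂ) ≠ 0 := by exact_mod_cast n.factorial_ne_zero
  simp only [gegenbauerCoeff_zero_right, poch_succ, Nat.factorial_succ]
  push_cast
  field_simp
  ring

lemma gegenbauerCoeff_recurrence_succ (hμ : ∀ m : ℕ, μ + 1 / 2 ≠ -(m : ℂ)) (n j : ℕ) :
    (n + 2) * gegenbauerCoeff μ (n + 2) (j + 1) =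
      2 * (n + 1 + μ) * (gegenbauerCoeff μ (n + 1) (j + 1) - 2 * gegenbauerCoeff μ (n + 1) j) -
        (n + 2 * μ) * gegenbauerCoeff μ n (j + 1) := by
  have hj : (j : ℂ) + 1 ≠ 0 := by exact_mod_cast j.succ_ne_zero
  have hn1 : (n : ℂ) + 1 ≠ 0 := by exact_mod_cast n.succ_ne_zero
  have hn2 : (n : ℂ) + 1 + 1 ≠ 0 := by exact_mod_cast (n + 1).succ_ne_zero
  have hn_fact : (n.factorial : ℂ) ≠ 0 := by exact_mod_cast n.factorial_ne_zero
  have hj_fact : (j.factorial : ℂ) ≠ 0 := by exact_mod_cast j.factorial_ne_zero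
  have hs : poch (μ + 1 / 2) j ≠ 0 := poch_ne_zero hμ j
  obtain ⟨q, hq⟩ : ∃ q, q = μ + 1 / 2 + j := ⟨_, rfl⟩
  have hq0 : q ≠ 0 := hq ▸ fun h ↦ hμ j (eq_neg_of_add_eq_zero_left h)
  -- All four coefficients are expressed through `poch (-(n + 1)) j` and `poch (2 * μ) (n + 1 + j)`.
  have hP2 : poch (-((n + 2 : ℕ) : ℂ)) (j + 1) = -(n + 2) * poch (-((n + 1 : ℕ) : ℂ)) j := by
    rw [poch_neg_natCast_succ]
    push_cast
    ring
  have hP0 : poch (-(n : ℂ)) (j + 1) =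
      -(poch (-((n + 1 : ℕ) : ℂ)) j * (j - n - 1) * (j - n)) / (n + 1) := by
    have h := poch_neg_natCast_succ n (j + 1)
    rw [poch_succ, poch_succ] at h
    push_cast at h ⊢
    rw [eq_div_iff hn1]
    linear_combination h
  simp only [gegenbauerCoeff, hP2, hP0, poch_succ (-((n + 1 : ℕ) : ℂ)), Nat.factorial_succ,
    show n + 2 + (j + 1) = n + 1 + j + 1 + 1 by ring, ← add_assoc (n + 1) j 1,
    show n + (j + 1) = n + 1 + j by ring, poch_succ (μ + 1 / 2), poch_succ (2 * μ) (n + 1 + j),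
    poch_succ (2 * μ) (n + 1 + j + 1)]
  push_cast
  rw [← hq]
  generalize poch (μ + 1 / 2) j = s at hs ⊢
  obtain rfl : μ = q - 1 / 2 - j := by rw [hq]; ring
  field_simp
  ring

lemma gegenbauerPoly_recurrence (hμ : ∀ m : ℕ, μ + 1 / 2 ≠ -(m : ℂ)) (n : ℕ) :
    Polynomial.C (n + 2 : ℂ) * gegenbauerPoly μ (n + 2) =
      Polynomial.C (2 * (n + 1 + μ)) *
          (gegenbauerPoly μ (n + 1) - Polynomial.C 2 * (Polynomial.X * gegenbauerPoly μ (n + 1))) -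
        Polynomial.C (n + 2 * μ) * gegenbauerPoly μ n := by
  ext j
  simp only [Polynomial.coeff_sub, Polynomial.coeff_C_mul]
  cases j with
  | zero => simp [coeff_gegenbauerPoly, gegenbauerCoeff_recurrence_zero]
  | succ j =>
    simp only [Polynomial.coeff_X_mul, coeff_gegenbauerPoly, gegenbauerCoeff_recurrence_succ hμ]

lemma gegenbauerC_zero : gegenbauerC 0 μ x = 1 := by
  simp [gegenbauerC]

lemma gegenbauerC_one (hμ : μ + 1 / 2 ≠ 0) : gegenbauerC 1 μ x = 2 * μ * x := by
  obtain ⟨q, rfl⟩ : ∃ q, μ = q - 1 / 2 := ⟨μ + 1 / 2, by ring⟩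
  rw [sub_add_cancel] at hμ
  simp only [gegenbauerC, poch, sum_range_succ, prod_range_succ, range_zero, sum_empty,
    prod_empty, Nat.factorial, sub_add_cancel, Nat.cast_zero, add_zero]
  push_cast
  field_simp
  ring

lemma gegenbauerC_recurrence (hμ : ∀ m : ℕ, μ + 1 / 2 ≠ -(m : ℂ)) (n : ℕ) :
    (n + 2) * gegenbauerC (n + 2) μ x =
      2 * (n + 1 + μ) * x * gegenbauerC (n + 1) μ x - (n + 2 * μ) * gegenbauerC n μ x := by
  have h := congrArg (eval ((1 - x) / 2)) (gegenbauerPoly_recurrence hμ n)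
  simp only [eval_mul, eval_sub, eval_C, eval_X, ← gegenbauerC_eq_eval] at h
  linear_combination h

/-- Gegenbauer polynomials of integer degree, zero in negative degrees: with this convention the
three-term recurrence has no boundary cases. -/
noncomputable def gegenbauerZ (μ x : ℂ) : ℤ → ℂ
  | (n : ℕ) => gegenbauerC n μ x
  | Int.negSucc _ => 0

@[simp]
lemma gegenbauerZ_natCast (n : ℕ) : gegenbauerZ μ x n = gegenbauerC n μ x := rfl

lemma gegenbauerZ_of_neg {j : ℤ} (hj : j < 0) : gegenbauerZ μ x j = 0 := by
  obtain ⟨n, rfl⟩ := Int.eq_negSucc_of_lt_zero hj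
  rfl

lemma gegenbauerZ_recurrence (hμ : ∀ m : ℕ, μ + 1 / 2 ≠ -(m : ℂ)) (j : ℤ) :
    2 * x * ((j + μ) * gegenbauerZ μ x j) =
      (j + 1) * gegenbauerZ μ x (j + 1) + (j - 1 + 2 * μ) * gegenbauerZ μ x (j - 1) := by
  rcases lt_trichotomy j 0 with hj | rfl | hj
  · have hsucc : ((j : ℂ) + 1) * gegenbauerZ μ x (j + 1) = 0 := by
      rcases (Int.add_one_le_of_lt hj).lt_or_eq with h | h
      · rw [gegenbauerZ_of_neg x h, mul_zero]
      · rw [← Int.cast_one, ← Int.cast_add, h, Int.cast_zero, zero_mul]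
    rw [hsucc, gegenbauerZ_of_neg x hj, gegenbauerZ_of_neg x (by lia)]
    ring
  · have h0 : gegenbauerZ μ x 0 = 1 := gegenbauerC_zero x
    have h1 : gegenbauerZ μ x (0 + 1) = 2 * μ * x :=
      gegenbauerC_one x (by simpa using hμ 0)
    rw [h0, h1, gegenbauerZ_of_neg x (by lia)]
    push_cast
    ring
  · obtain ⟨n, rfl⟩ := Int.eq_succ_of_zero_lt hj
    have h0 : gegenbauerZ μ x ((n : ℤ) + 1 - 1) = gegenbauerC n μ x := by
      rw [add_sub_cancel_right, gegenbauerZ_natCast]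
    have h1 : gegenbauerZ μ x ((n : ℤ) + 1) = gegenbauerC (n + 1) μ x := rfl
    have h2 : gegenbauerZ μ x ((n : ℤ) + 1 + 1) = gegenbauerC (n + 2) μ x := rfl
    rw [h0, h1, h2]
    push_cast
    linear_combination -gegenbauerC_recurrence x hμ n

end Recurrence

section Growth

variable {μ x u v : ℂ}

/-- The formal expansion of `(1 - u X) ^ (-μ)`. -/
noncomputable def pochSeries (μ u : ℂ) : ℂ⟦X⟧ :=
  PowerSeries.mk fun k ↦ poch μ k / (k.factorial : ℂ) * u ^ k

lemma derivative_pochSeries (μ u : ℂ) :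
    (1 - PowerSeries.C u * PowerSeries.X) * derivative ℂ (pochSeries μ u) =
      PowerSeries.C (u * μ) * pochSeries μ u := by
  have hcoeff (k : ℕ) : (k + 1) * (poch μ (k + 1) / ((k + 1).factorial : ℂ) * u ^ (k + 1)) =
      u * ((k + μ) * (poch μ k / (k.factorial : ℂ) * u ^ k)) := by
    have hk : (k : ℂ) + 1 ≠ 0 := by exact_mod_cast k.succ_ne_zero
    have hk_fact : (k.factorial : ℂ) ≠ 0 := by exact_mod_cast k.factorial_ne_zero
    rw [poch_succ, Nat.factorial_succ]
    push_cast
    field_simp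
    ring
  ext k
  rw [sub_mul, one_mul, map_sub, mul_assoc, PowerSeries.coeff_C_mul, PowerSeries.coeff_C_mul,
    PowerSeries.coeff_derivative]
  cases k with
  | zero =>
    have h := hcoeff 0
    simp only [pochSeries, PowerSeries.coeff_mk, PowerSeries.coeff_zero_X_mul, Nat.cast_zero] at h ⊢
    linear_combination h
  | succ k =>
    have h := hcoeff (k + 1)
    simp only [pochSeries, PowerSeries.coeff_mk, PowerSeries.coeff_succ_X_mul,
      PowerSeries.coeff_derivative, Nat.cast_succ] at h ⊢
    linear_combination h

lemma derivative_pochSeries_mul_pochSeries (huv : u * v = 1) (hx : u + v = 2 * x) :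
    (1 - PowerSeries.C (2 * x) * PowerSeries.X + PowerSeries.X ^ 2) *
        derivative ℂ (pochSeries μ u * pochSeries μ v) =
      PowerSeries.C (2 * μ) * (PowerSeries.C x - PowerSeries.X) *
        (pochSeries μ u * pochSeries μ v) := by
  have hu := derivative_pochSeries μ u
  have hv := derivative_pochSeries μ v
  have huv' : (PowerSeries.C u * PowerSeries.C v : ℂ⟦X⟧) = 1 := by rw [← map_mul, huv, map_one]
  have hx' : (PowerSeries.C u + PowerSeries.C v : ℂ⟦X⟧) = 2 * PowerSeries.C x := by
    rw [← map_add, hx, map_mul, map_ofNat]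
  rw [map_mul] at hu hv
  rw [Derivation.leibniz, smul_eq_mul, smul_eq_mul, map_mul, map_mul, map_ofNat]
  generalize derivative ℂ (pochSeries μ u) = U' at hu ⊢
  generalize derivative ℂ (pochSeries μ v) = V' at hv ⊢
  generalize pochSeries μ u = U at hu ⊢
  generalize pochSeries μ v = V at hv ⊢
  linear_combination (1 - PowerSeries.C v * PowerSeries.X) * V * hu +
    (1 - PowerSeries.C u * PowerSeries.X) * U * hv -
    (PowerSeries.X ^ 2 * (U * V' + V * U') + 2 * PowerSeries.X * PowerSeries.C μ * U * V) * huv' +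
    (PowerSeries.C μ * U * V + PowerSeries.X * (U * V' + V * U')) * hx'

lemma coeff_pochSeries_mul_pochSeries_recurrence (huv : u * v = 1) (hx : u + v = 2 * x) (n : ℕ) :
    (n + 2) * PowerSeries.coeff (n + 2) (pochSeries μ u * pochSeries μ v) =
      2 * (n + 1 + μ) * x * PowerSeries.coeff (n + 1) (pochSeries μ u * pochSeries μ v) -
        (n + 2 * μ) * PowerSeries.coeff n (pochSeries μ u * pochSeries μ v) := by
  have h := derivative_pochSeries_mul_pochSeries (μ := μ) huv hx
  generalize pochSeries μ u * pochSeries μ v = P at h ⊢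
  have hX : PowerSeries.coeff n (PowerSeries.X * derivative ℂ P) = n * PowerSeries.coeff n P := by
    cases n with
    | zero => simp
    | succ n =>
      rw [PowerSeries.coeff_succ_X_mul, PowerSeries.coeff_derivative]
      push_cast
      ring
  have hn := congrArg (PowerSeries.coeff (n + 1)) h
  simp only [add_mul, sub_mul, mul_sub, one_mul, sq, mul_assoc, map_add, map_sub,
    PowerSeries.coeff_C_mul, PowerSeries.coeff_succ_X_mul, PowerSeries.coeff_derivative, hX] at hn
  push_cast at hn
  linear_combination hn

lemma gegenbauerC_eq_coeff (hμ : ∀ m : ℕ, μ + 1 / 2 ≠ -(m : ℂ)) (huv : u * v = 1)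
    (hx : u + v = 2 * x) (n : ℕ) :
    gegenbauerC n μ x = PowerSeries.coeff n (pochSeries μ u * pochSeries μ v) := by
  induction n using Nat.twoStepInduction with
  | zero => simp [gegenbauerC_zero, pochSeries]
  | one =>
    rw [gegenbauerC_one x (by simpa using hμ 0), PowerSeries.coeff_mul, Nat.antidiagonal_succ]
    suffices h : 2 * μ * x = μ * v + μ * u by simpa [pochSeries, poch_succ] using h
    linear_combination -μ * hx
  | more n ih₀ ih₁ =>
    have hn : (n : ℂ) + 2 ≠ 0 := by exact_mod_cast (n + 1).succ_ne_zero
    refine mul_left_cancel₀ hn ?_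
    rw [gegenbauerC_recurrence x hμ, ih₀, ih₁,
      coeff_pochSeries_mul_pochSeries_recurrence huv hx]

lemma isBigO_gegenbauerC (hμ : ∀ m : ℕ, μ + 1 / 2 ≠ -(m : ℂ)) (huv : u * v = 1)
    (hx : u + v = 2 * x) {R : ℝ} (hu : ‖u‖ < R) (hv : ‖v‖ < R) :
    (fun n ↦ gegenbauerC n μ x) =O[⊤] fun n ↦ R ^ n := by
  have hR : 0 < R := (norm_nonneg u).trans_lt hu
  have hlt {w : ℂ} (hw : ‖w‖ < R) : ‖w * (R : ℂ)⁻¹‖ < 1 := by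
    rwa [norm_mul, norm_inv, norm_real, Real.norm_of_nonneg hR.le, ← div_eq_mul_inv, div_lt_one hR]
  refine isBigO_pow_of_summable_mul_inv_pow hR (Summable.of_norm ?_)
  refine (summable_norm_sum_mul_antidiagonal_of_summable_norm
    (hasSum_poch_div_factorial_mul_pow μ (hlt hu)).summable.norm
    (hasSum_poch_div_factorial_mul_pow μ (hlt hv)).summable.norm).congr fun n ↦ ?_
  rw [gegenbauerC_eq_coeff hμ huv hx, PowerSeries.coeff_mul, sum_mul]
  refine congrArg norm (sum_congr rfl fun p hp ↦ ?_)
  rw [← mem_antidiagonal.mp hp, pow_add]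
  simp only [pochSeries, PowerSeries.coeff_mk, mul_pow]
  ring

/-- Writing `x = (u + u⁻¹) / 2`, the level sets of `‖u‖ + ‖u‖⁻¹` are the ellipses with foci `±1`. -/
lemma exists_mul_eq_one_and_add_eq (x : ℂ) :
    ∃ u v : ℂ, u * v = 1 ∧ u + v = 2 * x ∧ ‖u‖ + ‖v‖ = ‖x - 1‖ + ‖x + 1‖ ∧ ‖v‖ ≤ ‖u‖ := by
  suffices h : ∃ u v : ℂ, u * v = 1 ∧ u + v = 2 * x ∧ ‖u‖ + ‖v‖ = ‖x - 1‖ + ‖x + 1‖ by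
    obtain ⟨u, v, huv, hx, hnorm⟩ := h
    rcases le_total ‖v‖ ‖u‖ with hle | hle
    · exact ⟨u, v, huv, hx, hnorm, hle⟩
    · exact ⟨v, u, mul_comm u v ▸ huv, add_comm u v ▸ hx, add_comm ‖u‖ _ ▸ hnorm, hle⟩
  obtain ⟨θ, rfl⟩ := cos_surjective x
  set a := exp (θ * I / 2) with ha
  set b := exp (-θ * I / 2) with hb
  have hab : a * b = 1 := by
    rw [ha, hb, ← exp_add, ← exp_zero]
    ring_nf
  have hcos : 2 * cos θ = a ^ 2 + b ^ 2 := by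
    rw [ha, hb, ← exp_nat_mul, ← exp_nat_mul, Complex.cos]
    push_cast
    ring_nf
  refine ⟨a ^ 2, b ^ 2, by rw [← mul_pow, hab, one_pow], hcos.symm, ?_⟩
  have hsub : cos θ - 1 = (a - b) ^ 2 / 2 := by linear_combination hcos / 2 + hab
  have hadd : cos θ + 1 = (a + b) ^ 2 / 2 := by linear_combination hcos / 2 - hab
  rw [hsub, hadd]
  simp only [norm_div, norm_pow, Complex.norm_ofNat]
  linear_combination parallelogram_law_with_norm ℝ a b / (-2)

end Growth

section Connection

variable {μ : ℂ} (x : ℂ)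

/-- The term of degree `i - k` in the Gegenbauer expansion of `(2 * x) ^ m / m!`, where `m = i + k`;
it vanishes for `i < k`. -/
noncomputable def connectionTerm (μ x : ℂ) (i k : ℕ) : ℂ :=
  (i - k + μ) / (poch μ (i + 1) * (k.factorial : ℂ)) * gegenbauerZ μ x (i - k)

/-- The part of `(i + k) * connectionTerm μ x i k` that matches the degree-raising term of
`gegenbauerZ_recurrence`. -/
noncomputable def connectionUp (μ x : ℂ) (i k : ℕ) : ℂ :=
  (i - k) / (poch μ i * (k.factorial : ℂ)) * gegenbauerZ μ x (i - k)

/-- The part of `(i + k) * connectionTerm μ x i k` that matches the degree-lowering term of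
`gegenbauerZ_recurrence`. -/
noncomputable def connectionDown (μ x : ℂ) (i k : ℕ) : ℂ :=
  k * (i - k + 2 * μ) / (poch μ (i + 1) * (k.factorial : ℂ)) * gegenbauerZ μ x (i - k)

lemma connectionUp_zero_left (k : ℕ) : connectionUp μ x 0 k = 0 := by
  cases k with
  | zero => simp [connectionUp]
  | succ k => rw [connectionUp, gegenbauerZ_of_neg x (by lia), mul_zero]

lemma connectionDown_zero_right (i : ℕ) : connectionDown μ x i 0 = 0 := by
  simp [connectionDown]

lemma add_mul_connectionTerm (hμ : ∀ m : ℕ, μ ≠ -(m : ℂ)) (i k : ℕ) :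
    (i + k) * connectionTerm μ x i k = connectionUp μ x i k + connectionDown μ x i k := by
  have hi : poch μ i ≠ 0 := poch_ne_zero hμ i
  have hμi : μ + i ≠ 0 := fun h ↦ hμ i (eq_neg_of_add_eq_zero_left h)
  have hk : (k.factorial : ℂ) ≠ 0 := by exact_mod_cast k.factorial_ne_zero
  rw [connectionTerm, connectionUp, connectionDown, poch_succ]
  field_simp
  ring

lemma two_mul_mul_connectionTerm (hμ : ∀ m : ℕ, μ + 1 / 2 ≠ -(m : ℂ)) (i k : ℕ) :
    2 * x * connectionTerm μ x i k =
      connectionUp μ x (i + 1) k + connectionDown μ x i (k + 1) := by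
  have hk : (k : ℂ) + 1 ≠ 0 := by exact_mod_cast k.succ_ne_zero
  have h := gegenbauerZ_recurrence x hμ (i - k)
  rw [connectionTerm, connectionUp, connectionDown, Nat.factorial_succ,
    show ((i + 1 : ℕ) : ℤ) - k = i - k + 1 by push_cast; ring,
    show (i : ℤ) - (k + 1 : ℕ) = i - k - 1 by push_cast; ring]
  push_cast at h ⊢
  rw [mul_left_comm (poch μ (i + 1)), mul_div_mul_left _ _ hk]
  linear_combination h / (poch μ (i + 1) * (k.factorial : ℂ))

lemma sum_antidiagonal_connectionTerm (hμ : ∀ m : ℕ, μ ≠ -(m : ℂ))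
    (hμ' : ∀ m : ℕ, μ + 1 / 2 ≠ -(m : ℂ)) (m : ℕ) :
    ∑ p ∈ antidiagonal m, connectionTerm μ x p.1 p.2 = (2 * x) ^ m / (m.factorial : ℂ) := by
  induction m with
  | zero =>
    have hμ0 : μ ≠ 0 := by simpa using hμ 0
    have h0 : gegenbauerZ μ x 0 = 1 := gegenbauerC_zero x
    simp [connectionTerm, poch_succ, h0, hμ0]
  | succ m ih =>
    have hm : (m : ℂ) + 1 ≠ 0 := by exact_mod_cast m.succ_ne_zero
    refine mul_left_cancel₀ hm ?_
    calc ((m : ℂ) + 1) * ∑ p ∈ antidiagonal (m + 1), connectionTerm μ x p.1 p.2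
        = ∑ p ∈ antidiagonal (m + 1), (connectionUp μ x p.1 p.2 + connectionDown μ x p.1 p.2) := by
          rw [mul_sum]
          refine sum_congr rfl fun p hp ↦ ?_
          rw [← add_mul_connectionTerm x hμ, ← Nat.cast_add, mem_antidiagonal.mp hp, Nat.cast_succ]
      _ = ∑ p ∈ antidiagonal m,
            (connectionUp μ x (p.1 + 1) p.2 + connectionDown μ x p.1 (p.2 + 1)) := by
          rw [sum_add_distrib, sum_add_distrib, Nat.sum_antidiagonal_succ,
            Nat.sum_antidiagonal_succ' (f := fun p ↦ connectionDown μ x p.1 p.2),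
            connectionUp_zero_left, connectionDown_zero_right, zero_add, zero_add]
      _ = 2 * x * ((2 * x) ^ m / (m.factorial : ℂ)) := by
          rw [← ih, mul_sum]
          exact sum_congr rfl fun p _ ↦ (two_mul_mul_connectionTerm x hμ' p.1 p.2).symm
      _ = (m + 1) * ((2 * x) ^ (m + 1) / ((m + 1).factorial : ℂ)) := by
          rw [Nat.factorial_succ]
          push_cast
          field_simp
          ring

end Connection

section DoubleSeries

variable {μ ν x t u v : ℂ}

lemma isBigO_add_mul_gegenbauerZ (hμ : ∀ m : ℕ, μ ≠ -(m : ℂ))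
    (hμ' : ∀ m : ℕ, μ + 1 / 2 ≠ -(m : ℂ)) (huv : u * v = 1) (hx : u + v = 2 * x) {R : ℝ}
    (hu : ‖u‖ < R) (hv : ‖v‖ < R) :
    (fun j : ℤ ↦ (j + μ) * gegenbauerZ μ x j) =O[⊤] fun j ↦ R ^ j := by
  obtain ⟨R', hR', hRR'⟩ := exists_between (max_lt hu hv)
  obtain ⟨hu', hv'⟩ := max_lt_iff.mp hR'
  have hR'0 : 0 < R' := (norm_nonneg u).trans_lt hu'
  have hnat : (fun n : ℕ ↦ (n + μ) * gegenbauerC n μ x) =O[⊤] fun n ↦ R ^ n := by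
    refine (((isBigO_poch_div_poch (μ + 1) μ ((one_lt_div hR'0).mpr hRR')).const_mul_left μ).mul
      (isBigO_gegenbauerC hμ' huv hx hu' hv')).congr (fun n ↦ ?_) fun n ↦ ?_
    · rw [← mul_div_assoc, ← poch_succ_left, poch_succ,
        mul_div_cancel_left₀ _ (poch_ne_zero hμ n), add_comm μ]
    · rw [← mul_pow, div_mul_cancel₀ _ hR'0.ne']
  obtain ⟨K, hK, hbound⟩ := hnat.exists_nonneg
  rw [isBigOWith_top] at hbound
  refine isBigO_top.mpr ⟨K, fun j ↦ ?_⟩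
  rcases lt_or_ge j 0 with hj | hj
  · rw [gegenbauerZ_of_neg x hj, mul_zero, norm_zero]
    positivity
  · lift j to ℕ using hj
    simpa using hbound j

lemma isBigO_connectionTerm (hμ : ∀ m : ℕ, μ ≠ -(m : ℂ))
    (hμ' : ∀ m : ℕ, μ + 1 / 2 ≠ -(m : ℂ)) (huv : u * v = 1) (hx : u + v = 2 * x) {r R : ℝ}
    (hr : 1 < r) (hu : ‖u‖ < R) (hv : ‖v‖ < R) :
    (fun p : ℕ × ℕ ↦ connectionTerm μ x p.1 p.2) =O[⊤]
      fun p ↦ (r * R) ^ p.1 * R⁻¹ ^ p.2 / (p.1.factorial * p.2.factorial : ℝ) := by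
  have hR : R ≠ 0 := ((norm_nonneg u).trans_lt hu).ne'
  have hpoch := ((isBigO_poch_div_poch 1 (μ + 1) hr).const_mul_left μ⁻¹).comp_tendsto
    (tendsto_top : Tendsto (Prod.fst : ℕ × ℕ → ℕ) ⊤ ⊤)
  have hgeg := (isBigO_add_mul_gegenbauerZ hμ hμ' huv hx hu hv).comp_tendsto
    (tendsto_top : Tendsto (fun p : ℕ × ℕ ↦ (p.1 - p.2 : ℤ)) ⊤ ⊤)
  have hfact : (fun p : ℕ × ℕ ↦ ((p.1.factorial * p.2.factorial : ℂ))⁻¹) =O[⊤]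
      fun p ↦ ((p.1.factorial * p.2.factorial : ℝ))⁻¹ :=
    isBigO_of_le _ fun p ↦ by simp
  refine ((hpoch.mul hgeg).mul hfact).congr (fun p ↦ ?_) fun p ↦ ?_
  · have hp : (p.1.factorial : ℂ) ≠ 0 := by exact_mod_cast p.1.factorial_ne_zero
    simp only [Function.comp_apply, connectionTerm, poch_one_left, poch_succ_left]
    push_cast
    field_simp
  · simp only [Function.comp_apply, zpow_sub₀ hR, zpow_natCast, mul_pow, inv_pow]
    field_simp

/-- The terms of the double series obtained by inserting the connection formula into the binomial
series of `(1 - t * x) ^ (-ν)`. -/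
noncomputable def expansionTerm (μ ν x t : ℂ) (p : ℕ × ℕ) : ℂ :=
  poch ν (p.1 + p.2) * (t / 2) ^ (p.1 + p.2) * connectionTerm μ x p.1 p.2

lemma isBigO_expansionTerm (hμ : ∀ m : ℕ, μ ≠ -(m : ℂ))
    (hμ' : ∀ m : ℕ, μ + 1 / 2 ≠ -(m : ℂ)) (huv : u * v = 1) (hx : u + v = 2 * x) {r R : ℝ}
    (hr : 1 < r) (hu : ‖u‖ < R) (hv : ‖v‖ < R) :
    expansionTerm μ ν x t =O[⊤] fun p ↦ ((p.1 + p.2).choose p.1 : ℝ) *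
      ((r * ‖t‖ / 2 * (r * R)) ^ p.1 * (r * ‖t‖ / 2 * R⁻¹) ^ p.2) := by
  have hpoch := (isBigO_poch_div_poch ν 1 hr).comp_tendsto
    (tendsto_top : Tendsto (fun p : ℕ × ℕ ↦ p.1 + p.2) ⊤ ⊤)
  have hpow : (fun p : ℕ × ℕ ↦ (t / 2) ^ (p.1 + p.2) * ((p.1 + p.2).factorial : ℂ)) =O[⊤]
      fun p ↦ (‖t‖ / 2) ^ (p.1 + p.2) * ((p.1 + p.2).factorial : ℝ) :=
    isBigO_of_le _ fun p ↦ by simp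
  refine ((hpoch.mul hpow).mul (isBigO_connectionTerm hμ hμ' huv hx hr hu hv)).congr
    (fun p ↦ ?_) fun p ↦ ?_
  · have hp : ((p.1 + p.2).factorial : ℂ) ≠ 0 := by exact_mod_cast (p.1 + p.2).factorial_ne_zero
    simp only [Function.comp_apply, expansionTerm, poch_one_left]
    field_simp
  · rw [Nat.cast_add_choose]
    simp only [Function.comp_apply, mul_pow, div_pow, pow_add]
    field_simp

lemma summable_of_summable_sum_antidiagonal {f : ℕ × ℕ → ℝ} (hf : 0 ≤ f)
    (h : Summable fun m ↦ ∑ p ∈ antidiagonal m, f p) : Summable f := by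
  rw [← HasAntidiagonal.sigmaAntidiagonalEquivProd.summable_iff]
  refine (summable_sigma_of_nonneg fun _ ↦ hf _).mpr
    ⟨fun m ↦ Summable.of_finite, h.congr fun m ↦ ?_⟩
  rw [tsum_fintype]
  exact (sum_coe_sort (antidiagonal m) f).symm

lemma hasSum_sum_antidiagonal {f : ℕ × ℕ → ℂ} (hf : Summable f) :
    HasSum (fun m ↦ ∑ p ∈ antidiagonal m, f p) (∑' p, f p) := by
  refine (HasAntidiagonal.sigmaAntidiagonalEquivProd.hasSum_iff.mpr hf.hasSum).sigma fun m ↦ ?_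
  rw [← sum_coe_sort]
  exact hasSum_fintype _

lemma summable_choose_mul_pow_mul_pow {a b : ℝ} (ha : 0 ≤ a) (hb : 0 ≤ b) (hab : a + b < 1) :
    Summable fun p : ℕ × ℕ ↦ ((p.1 + p.2).choose p.1 : ℝ) * (a ^ p.1 * b ^ p.2) := by
  refine summable_of_summable_sum_antidiagonal (fun p ↦ by positivity) ?_
  refine (summable_geometric_of_lt_one (add_nonneg ha hb) hab).congr fun m ↦ ?_
  rw [(Commute.all a b).add_pow']
  refine sum_congr rfl fun p hp ↦ ?_
  rw [nsmul_eq_mul, mem_antidiagonal.mp hp]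

lemma summable_expansionTerm (hμ : ∀ m : ℕ, μ ≠ -(m : ℂ)) (hμ' : ∀ m : ℕ, μ + 1 / 2 ≠ -(m : ℂ))
    (hx : ‖t‖ * (‖x - 1‖ + ‖x + 1‖) < 2) : Summable (expansionTerm μ ν x t) := by
  obtain ⟨u, v, huv, huvx, hnorm, hvu⟩ := exists_mul_eq_one_and_add_eq x
  have hu : 0 < ‖u‖ := norm_pos_iff.mpr (left_ne_zero_of_mul_eq_one huv)
  have hinv : ‖v‖ = ‖u‖⁻¹ := by rw [← norm_inv, eq_inv_of_mul_eq_one_right huv]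
  have hlim : Tendsto (fun r : ℝ ↦ r * ‖t‖ / 2 * (r * (r * ‖u‖)) + r * ‖t‖ / 2 * (r * ‖u‖)⁻¹)
      (𝓝[>] 1) (𝓝 (‖t‖ * (‖x - 1‖ + ‖x + 1‖) / 2)) := by
    have hcont : ContinuousAt
        (fun r : ℝ ↦ r * ‖t‖ / 2 * (r * (r * ‖u‖)) + r * ‖t‖ / 2 * (r * ‖u‖)⁻¹) 1 := by
      fun_prop (disch := simp [hu.ne'])
    convert hcont.tendsto.mono_left nhdsWithin_le_nhds using 2
    rw [← hnorm, hinv]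
    ring
  obtain ⟨r, hr1, hr⟩ := ((hlim.eventually_lt_const ((div_lt_one two_pos).mpr hx)).and
    self_mem_nhdsWithin).exists
  have hur : ‖u‖ < r * ‖u‖ := lt_mul_of_one_lt_left hu hr
  exact summable_of_isBigO
    (summable_choose_mul_pow_mul_pow (by positivity) (by positivity) hr1)
    ((isBigO_expansionTerm hμ hμ' huv huvx hr hur (hvu.trans_lt hur)).mono le_top)

lemma sum_antidiagonal_expansionTerm (hμ : ∀ m : ℕ, μ ≠ -(m : ℂ))
    (hμ' : ∀ m : ℕ, μ + 1 / 2 ≠ -(m : ℂ)) (m : ℕ) :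
    ∑ p ∈ antidiagonal m, expansionTerm μ ν x t p =
      poch ν m / (m.factorial : ℂ) * (t * x) ^ m := by
  calc ∑ p ∈ antidiagonal m, expansionTerm μ ν x t p
      = poch ν m * (t / 2) ^ m * ∑ p ∈ antidiagonal m, connectionTerm μ x p.1 p.2 := by
        rw [mul_sum]
        refine sum_congr rfl fun p hp ↦ ?_
        rw [expansionTerm, mem_antidiagonal.mp hp]
    _ = poch ν m / (m.factorial : ℂ) * ((t / 2) * (2 * x)) ^ m := by
        rw [sum_antidiagonal_connectionTerm x hμ hμ', mul_pow (t / 2)]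
        ring
    _ = poch ν m / (m.factorial : ℂ) * (t * x) ^ m := by
        rw [← mul_assoc, div_mul_cancel₀ t two_ne_zero]

lemma norm_mul_lt_one (hx : ‖t‖ * (‖x - 1‖ + ‖x + 1‖) < 2) : ‖t * x‖ < 1 := by
  have h : 2 * ‖x‖ ≤ ‖x - 1‖ + ‖x + 1‖ := by
    simpa [← two_mul] using norm_add_le (x - 1) (x + 1)
  rw [norm_mul]
  nlinarith [norm_nonneg t]

lemma hasSum_expansionTerm (hμ : ∀ m : ℕ, μ ≠ -(m : ℂ)) (hμ' : ∀ m : ℕ, μ + 1 / 2 ≠ -(m : ℂ))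
    (hx : ‖t‖ * (‖x - 1‖ + ‖x + 1‖) < 2) :
    HasSum (expansionTerm μ ν x t) (1 / (1 - t * x) ^ ν) := by
  have hsum := summable_expansionTerm (ν := ν) hμ hμ' hx
  have hdiag := hasSum_sum_antidiagonal hsum
  simp only [sum_antidiagonal_expansionTerm hμ hμ'] at hdiag
  rw [(hasSum_poch_div_factorial_mul_pow ν (norm_mul_lt_one hx)).unique hdiag]
  exact hsum.hasSum

lemma expansionTerm_add_left (n k : ℕ) :
    expansionTerm μ ν x t (n + k, k) =
      poch ν n * (t / 2) ^ n * ((n + μ) / poch μ (n + 1)) * gegenbauerC n μ x *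
        (poch ((n + ν + 1) / 2) k * poch ((n + ν) / 2) k /
          (poch (n + μ + 1) k * (k.factorial : ℂ)) * (t ^ 2) ^ k) := by
  have hν : poch ν (n + k + k) =
      poch ν n * (4 ^ k * (poch ((n + ν + 1) / 2) k * poch ((n + ν) / 2) k)) := by
    rw [poch_half_mul_poch_half, add_assoc, ← two_mul, poch_add, add_comm ν]
    field_simp
  have hμ : poch μ (n + k + 1) = poch μ (n + 1) * poch (n + μ + 1) k := by
    rw [add_right_comm, poch_add]
    push_cast
    ring_nf
  have ht : (t / 2) ^ (n + k + k) * 4 ^ k = (t / 2) ^ n * (t ^ 2) ^ k := by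
    rw [add_assoc, ← two_mul, pow_add, pow_mul, mul_assoc, ← mul_pow]
    ring_nf
  have hC : gegenbauerZ μ x ((n + k : ℕ) - k) = gegenbauerC n μ x := by simp
  simp only [expansionTerm, connectionTerm, hν, hμ, hC]
  push_cast
  rw [add_sub_cancel_right]
  linear_combination poch ν n * (n + μ) / (poch μ (n + 1) * poch (n + μ + 1) k * k.factorial) *
    poch ((n + ν + 1) / 2) k * poch ((n + ν) / 2) k * gegenbauerC n μ x * ht

lemma hasSum_hyp2F1_mul_gegenbauerC (hμ : ∀ m : ℕ, μ ≠ -(m : ℂ))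
    (hμ' : ∀ m : ℕ, μ + 1 / 2 ≠ -(m : ℂ)) (hx : ‖t‖ * (‖x - 1‖ + ‖x + 1‖) < 2) :
    HasSum (fun n : ℕ ↦ poch ν n * (t / 2) ^ n * ((n + μ) / poch μ (n + 1)) *
        gegenbauerC n μ x * hyp2F1 ((n + ν + 1) / 2) ((n + ν) / 2) (n + μ + 1) (t ^ 2))
      (1 / (1 - t * x) ^ ν) := by
  have hinj : Function.Injective fun p : ℕ × ℕ ↦ (p.1 + p.2, p.2) := by
    rintro ⟨n, k⟩ ⟨n', k'⟩ h
    simp only [Prod.mk.injEq] at h ⊢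
    lia
  have hsupp : ∀ p ∉ Set.range fun p : ℕ × ℕ ↦ (p.1 + p.2, p.2),
      expansionTerm μ ν x t p = 0 := by
    rintro ⟨i, k⟩ hp
    have hik : i < k := not_le.mp fun h ↦ hp ⟨(i - k, k), by simp [h]⟩
    rw [expansionTerm, connectionTerm, gegenbauerZ_of_neg x (by lia), mul_zero, mul_zero]
  have h := (hinj.hasSum_iff hsupp).mpr (hasSum_expansionTerm hμ hμ' hx)
  refine h.prod_fiberwise fun n ↦ ?_
  simp only [hyp2F1, ← tsum_mul_left, ← expansionTerm_add_left]
  exact (h.summable.prod_factor n).hasSum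

end DoubleSeries

section Legendre

variable {μ ν x : ℂ}

lemma ofReal_mul_cpow {r : ℝ} (hr : 0 < r) (w s : ℂ) :
    ((r : ℂ) * w) ^ s = (r : ℂ) ^ s * w ^ s := by
  have hr' : (r : ℂ) ≠ 0 := by exact_mod_cast hr.ne'
  rcases eq_or_ne w 0 with rfl | hw
  · rcases eq_or_ne s 0 with rfl | hs
    · simp
    · simp [zero_cpow hs]
  · rw [cpow_def_of_ne_zero (mul_ne_zero hr' hw), cpow_def_of_ne_zero hr',
      cpow_def_of_ne_zero hw, log_ofReal_mul hr hw, ofReal_log hr.le, ← exp_add, add_mul]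

lemma legendreQ_natCast_add (hμ : ∀ m : ℕ, μ ≠ -(m : ℂ)) (hν : ∀ m : ℕ, ν ≠ -(m : ℂ)) {z : ℂ}
    (hz : z ≠ 0) (n : ℕ) :
    legendreQ (n + μ - 1 / 2) (ν - μ - 1 / 2) z =
      √Real.pi * exp (Real.pi * I * (ν - μ - 1 / 2)) * Gamma ν *
          (z ^ 2 - 1) ^ ((ν - μ - 1 / 2) / 2) / (2 ^ (μ + 1 / 2) * Gamma μ * z ^ ν) *
        (poch ν n * (z⁻¹ / 2) ^ n / poch μ (n + 1) *
          hyp2F1 ((n + ν + 1) / 2) ((n + ν) / 2) (n + μ + 1) (z⁻¹ ^ 2)) := by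
  have hΓ : Gamma (n + μ + 1) = poch μ (n + 1) * Gamma μ := by
    rw [← Gamma_natCast_add hμ, Nat.cast_succ, add_right_comm]
  rw [legendreQ, show (n : ℂ) + μ - 1 / 2 + (ν - μ - 1 / 2) + 1 = n + ν by ring,
    show (n : ℂ) + μ - 1 / 2 + (ν - μ - 1 / 2) + 2 = n + ν + 1 by ring,
    show (n : ℂ) + μ - 1 / 2 + 3 / 2 = n + μ + 1 by ring,
    show (n : ℂ) + μ - 1 / 2 + 1 = n + (μ + 1 / 2) by ring,
    hΓ, Gamma_natCast_add hν, cpow_add _ _ hz, cpow_add _ _ two_ne_zero, cpow_natCast,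
    cpow_natCast, inv_pow, one_div (z ^ 2), div_pow, inv_pow]
  field_simp

lemma hasSum_legendreQ_mul_gegenbauerC (hμ : ∀ m : ℕ, μ ≠ -(m : ℂ))
    (hμ' : ∀ m : ℕ, μ + 1 / 2 ≠ -(m : ℂ)) (hν : ∀ m : ℕ, ν ≠ -(m : ℂ)) {z : ℝ}
    (hx : ‖x - 1‖ + ‖x + 1‖ < 2 * z) :
    HasSum (fun n : ℕ ↦
        (n + μ) * legendreQ (n + μ - 1 / 2) (ν - μ - 1 / 2) z * gegenbauerC n μ x)
      (√Real.pi * exp (Real.pi * I * (ν - μ - 1 / 2)) * Gamma ν *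
        ((z : ℂ) ^ 2 - 1) ^ ((ν - μ - 1 / 2) / 2) / (2 ^ (μ + 1 / 2) * Gamma μ * (z - x) ^ ν)) := by
  have hz : 0 < z := by linarith [norm_nonneg (x - 1), norm_nonneg (x + 1)]
  have hz' : (z : ℂ) ≠ 0 := by exact_mod_cast hz.ne'
  have ht : ‖(z : ℂ)⁻¹‖ * (‖x - 1‖ + ‖x + 1‖) < 2 := by
    rwa [norm_inv, norm_real, Real.norm_of_nonneg hz.le, inv_mul_lt_iff₀ hz, mul_comm z]
  have hzx : (z - x : ℂ) ^ ν = z ^ ν * (1 - (z : ℂ)⁻¹ * x) ^ ν := by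
    rw [← ofReal_mul_cpow hz, mul_sub, mul_one, mul_inv_cancel_left₀ hz']
  have h := (hasSum_hyp2F1_mul_gegenbauerC (ν := ν) hμ hμ' ht).mul_left
    (√Real.pi * exp (Real.pi * I * (ν - μ - 1 / 2)) * Gamma ν *
      ((z : ℂ) ^ 2 - 1) ^ ((ν - μ - 1 / 2) / 2) / (2 ^ (μ + 1 / 2) * Gamma μ * z ^ ν))
  rw [mul_one_div, div_div, mul_assoc _ ((z : ℂ) ^ ν), ← hzx] at h
  refine h.congr_fun fun n ↦ ?_
  rw [legendreQ_natCast_add hμ hν hz']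
  ring

/-- For `z = (ρ + ρ⁻¹) / 2` we have `√(z² - 1) = (ρ⁻¹ - ρ) / 2`. -/
lemma cpow_mul_cpow_div_cpow_eq {ρ : ℝ} (hρ0 : 0 < ρ) (hρ1 : ρ < 1) (α ν x : ℂ) :
    (ρ : ℂ) ^ α * (1 - (ρ : ℂ) ^ 2) ^ (ν - α) / (1 + (ρ : ℂ) ^ 2 - 2 * ρ * x) ^ ν =
      (((1 + (ρ : ℂ) ^ 2) / (2 * ρ)) ^ 2 - 1) ^ ((ν - α) / 2) /
        (2 ^ α * ((1 + (ρ : ℂ) ^ 2) / (2 * ρ) - x) ^ ν) := by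
  have hρ : (ρ : ℂ) ≠ 0 := by exact_mod_cast hρ0.ne'
  have hρ2 : 0 < 2 * ρ := by positivity
  obtain ⟨s, hs⟩ : ∃ s, s = (1 - ρ ^ 2) / (2 * ρ) := ⟨_, rfl⟩
  have hs0 : 0 < s := by
    rw [hs]
    exact div_pos (by nlinarith) hρ2
  have hs' : (s : ℂ) ≠ 0 := by exact_mod_cast hs0.ne'
  have hroot : ((1 + (ρ : ℂ) ^ 2) / (2 * ρ)) ^ 2 - 1 = s * s := by
    rw [hs]
    push_cast
    field_simp
    ring
  have hnum : 1 - (ρ : ℂ) ^ 2 = (2 * ρ : ℝ) * s := by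
    rw [hs]
    push_cast
    field_simp
  have hden : 1 + (ρ : ℂ) ^ 2 - 2 * ρ * x = (2 * ρ : ℝ) * ((1 + (ρ : ℂ) ^ 2) / (2 * ρ) - x) := by
    push_cast
    field_simp
  have h2ρ (w : ℂ) : ((2 * ρ : ℝ) : ℂ) ^ w = 2 ^ w * (ρ : ℂ) ^ w := by
    rw [ofReal_mul, ofReal_mul_cpow two_pos, ofReal_ofNat]
  have hne (w : ℂ) : (ρ : ℂ) ^ w ≠ 0 := by simp [cpow_eq_zero_iff, hρ]
  have hne2 (w : ℂ) : (2 : ℂ) ^ w ≠ 0 := by simp [cpow_eq_zero_iff]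
  rw [hroot, ofReal_mul_cpow hs0, ← cpow_add _ _ hs', add_halves, hnum, hden,
    ofReal_mul_cpow hρ2, ofReal_mul_cpow hρ2, h2ρ, h2ρ, cpow_sub _ _ hρ, cpow_sub _ _ two_ne_zero]
  field_simp [hne ν, hne α, hne2 ν, hne2 α]

lemma natCast_ne_two_sub_natCast {d : ℕ} (hd : 3 ≤ d) (m : ℕ) : (d : ℂ) ≠ 2 - m := by
  intro h
  have h' : d + m = 2 := by exact_mod_cast eq_sub_iff_add_eq.mp h
  lia

lemma norm_sub_one_add_norm_add_one_lt {x : ℝ} (hx : x ∈ Set.Icc (-1) 1) {ρ : ℝ} (hρ0 : 0 < ρ)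
    (hρ1 : ρ < 1) : ‖(x : ℂ) - 1‖ + ‖(x : ℂ) + 1‖ < ρ + ρ⁻¹ := by
  have hfoci : ‖(x : ℂ) - 1‖ + ‖(x : ℂ) + 1‖ = 2 := by
    rw [← ofReal_one, ← ofReal_sub, ← ofReal_add, norm_real, norm_real,
      Real.norm_of_nonpos (by linarith [hx.2]), Real.norm_of_nonneg (by linarith [hx.1])]
    ring
  have hsq : 0 < (1 - ρ) ^ 2 / ρ := div_pos (pow_pos (sub_pos.mpr hρ1) 2) hρ0
  have hρ : ρ + ρ⁻¹ - 2 = (1 - ρ) ^ 2 / ρ := by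
    field_simp
    ring
  linarith

theorem gegenbauer_expansion_dimension_d_general {d ν x : ℂ} (hd : ∀ m : ℕ, d ≠ 2 - m)
    (hν : ∀ m : ℕ, ν ≠ -(m : ℂ)) {ρ : ℝ} (hρ0 : 0 < ρ) (hρ1 : ρ < 1)
    (hx : ‖x - 1‖ + ‖x + 1‖ < ρ + ρ⁻¹) :
    HasSum (fun n : ℕ ↦
        exp (-(Real.pi * I * (ν - (d - 1) / 2))) * Gamma ((d - 2) / 2) / (2 * √Real.pi * Gamma ν) *
          ((2 * n + d - 2) *
            legendreQ (n + (d - 3) / 2) (ν - (d - 1) / 2) ((1 + (ρ : ℂ) ^ 2) / (2 * ρ)) *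
            gegenbauerC n (d / 2 - 1) x))
      ((ρ : ℂ) ^ ((d - 1) / 2) * (1 - (ρ : ℂ) ^ 2) ^ (ν - (d - 1) / 2) /
        (1 + (ρ : ℂ) ^ 2 - 2 * ρ * x) ^ ν) := by
  have hμ (m : ℕ) : d / 2 - 1 ≠ -(m : ℂ) := fun h ↦
    hd (2 * m) (by push_cast; linear_combination 2 * h)
  have hμ' (m : ℕ) : d / 2 - 1 + 1 / 2 ≠ -(m : ℂ) := fun h ↦
    hd (2 * m + 1) (by push_cast; linear_combination 2 * h)
  have hx' : ‖x - 1‖ + ‖x + 1‖ < 2 * ((1 + ρ ^ 2) / (2 * ρ)) := by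
    convert hx using 1
    field_simp
    ring
  have hΓν : Gamma ν ≠ 0 := Gamma_ne_zero hν
  have hd2 : d / 2 - 1 = (d - 2) / 2 := by ring
  have hΓμ : Gamma ((d - 2) / 2) ≠ 0 := hd2 ▸ Gamma_ne_zero hμ
  have hπ : (√Real.pi : ℂ) ≠ 0 := by exact_mod_cast (Real.sqrt_pos.mpr Real.pi_pos).ne'
  have hconst (w a b c : ℂ) : exp (-w) * Gamma ((d - 2) / 2) / (√Real.pi * Gamma ν) *
      (√Real.pi * exp w * Gamma ν * a / (b * Gamma ((d - 2) / 2) * c)) = a / (b * c) := by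
    rw [exp_neg]
    field_simp
  have h := (hasSum_legendreQ_mul_gegenbauerC hμ hμ' hν hx').mul_left
    (exp (-(Real.pi * I * (ν - (d - 1) / 2))) * Gamma ((d - 2) / 2) / (√Real.pi * Gamma ν))
  push_cast at h
  rw [show ν - (d / 2 - 1) - 1 / 2 = ν - (d - 1) / 2 by ring,
    show d / 2 - 1 + 1 / 2 = (d - 1) / 2 by ring, hd2, hconst,
    ← cpow_mul_cpow_div_cpow_eq hρ0 hρ1] at h
  refine h.congr_fun fun n ↦ ?_
  rw [show (n : ℂ) + (d - 2) / 2 - 1 / 2 = n + (d - 3) / 2 by ring, hd2]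
  field_simp
  ring

end Legendre

/-- the `d`-dimensional variant obtained by `ν = d/2-1` and `ν ↦ -ν/2`,
generalizing (9.9.2) of Andrews, Askey & Roy. -/
theorem gegenbauer_expansion_dimension_d
    (d : ℕ) (hd : 3 ≤ d)
    (ν : ℂ) (hν : ∀ m : ℕ, ν ≠ -(m : ℂ)) (hν2 : ∀ m : ℕ, -ν / 2 ≠ -(m : ℂ))
    (x : ℝ) (hx : x ∈ Set.Icc (-1 : ℝ) 1)
    (ρ : ℝ) (hρ0 : 0 < ρ) (hρ1 : ρ < 1) :
    (ρ : ℂ) ^ (((d : ℂ) - 1) / 2) * (1 - (ρ : ℂ) ^ 2) ^ (ν - ((d : ℂ) - 1) / 2) /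
        (1 + (ρ : ℂ) ^ 2 - 2 * (ρ : ℂ) * (x : ℂ)) ^ ν =
      Complex.exp (-(Real.pi * I * (ν - ((d : ℂ) - 1) / 2))) * Complex.Gamma (((d : ℂ) - 2) / 2) /
          (2 * (Real.sqrt Real.pi : ℂ) * Complex.Gamma ν) *
        ∑' n : ℕ,
          (2 * (n : ℂ) + (d : ℂ) - 2) *
            legendreQ ((n : ℂ) + ((d : ℂ) - 3) / 2) (ν - ((d : ℂ) - 1) / 2)
              ((1 + (ρ : ℂ) ^ 2) / (2 * (ρ : ℂ))) *
            gegenbauerC n ((d : ℂ) / 2 - 1) (x : ℂ) := by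
  rw [← tsum_mul_left]
  exact (gegenbauer_expansion_dimension_d_general (natCast_ne_two_sub_natCast hd) hν hρ0 hρ1
    (norm_sub_one_add_norm_add_one_lt hx hρ0 hρ1)).tsum_eq.symm
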